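/- There is a universal constant c > 0 such that every k-player XOR game G with n possible inputs per player has classical bias β(G) ≥ c · k^{−3/2} · n^{−(k−1)/2}. -/

import Mathlib

noncomputable section

/-!
Induction on the number of players gives the Bohnenblust–Hille inequality with a linear constant,
`(∑ |aᵢ| ^ (2k/(k+1))) ^ ((k+1)/(2k)) ≤ k β(a)` for every real tensor `a`. Once player `j` commits
to a strategy, the others are left with a `(k - 1)`-player game of no larger bias; when the bound
for that game is averaged over all strategies of player `j`, Khinchine's inequality turns it into a
bound on the `ℓ_p(ℓ₂)` norm of `a` along direction `j`, with `p = 2(k-1)/k`. Blei's inequality,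
which follows from those of Hölder and Loomis–Whitney, combines the `k` directions. The Khinchine
constant is close enough to `1` to be absorbed by the growth from `k - 1` to `k`, because
`3 ≤ (1 + 1/m) ^ (2m)`.

Hölder's inequality against the constant tensor then gives `∑ |aᵢ| ≤ k n ^ ((k-1)/2) β(a)`.
-/

open Finset
open scoped NNReal BigOperators

theorem sum_rpow_mul_prod_rpow_le {τ ι : Type*} [Fintype τ] [Fintype ι] (g : τ → ℝ≥0)
    (f : ι → τ → ℝ≥0) {q : ℝ} {w : ι → ℝ} (hq : 0 ≤ q) (hw : ∀ j, 0 ≤ w j)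
    (hqw : q + ∑ j, w j = 1) :
    ∑ t, g t ^ q * ∏ j, f j t ^ w j ≤ (∑ t, g t) ^ q * ∏ j, (∑ t, f j t) ^ w j := by
  let _ : MeasurableSpace τ := ⊤
  have holder := ENNReal.lintegral_mul_prod_norm_pow_le (μ := .count) univ
    (g := fun t => (g t : ENNReal)) (f := fun j t => (f j t : ENNReal))
    measurable_from_top.aemeasurable (fun _ _ => measurable_from_top.aemeasurable)
    q hqw hq fun j _ => hw j
  simp only [MeasureTheory.lintegral_count, tsum_fintype, ← ENNReal.coe_rpow_of_nonneg _ hq,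
    ← ENNReal.coe_rpow_of_nonneg _ (hw _), ← ENNReal.ofNNReal_finsetSum] at holder
  exact_mod_cast holder

theorem sum_prod_rpow_le {τ ι : Type*} [Fintype τ] [Fintype ι] (f : ι → τ → ℝ≥0) {w : ι → ℝ}
    (hw : ∀ j, 0 ≤ w j) (hw_sum : ∑ j, w j = 1) :
    ∑ t, ∏ j, f j t ^ w j ≤ ∏ j, (∑ t, f j t) ^ w j := by
  simpa using sum_rpow_mul_prod_rpow_le 0 f le_rfl hw (by rwa [zero_add])

theorem sum_prod_rpow_inv_le {τ : Type*} [Fintype τ] {m : ℕ} (f : Fin (m + 1) → τ → ℝ≥0) :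
    ∑ t, ∏ j, f j t ^ ((m : ℝ) + 1)⁻¹ ≤ ∏ j, (∑ t, f j t) ^ ((m : ℝ) + 1)⁻¹ :=
  sum_prod_rpow_le f (fun _ => by positivity) <| by
    rw [sum_const, card_univ, Fintype.card_fin, nsmul_eq_mul, Nat.cast_succ,
      mul_inv_cancel₀ (by positivity)]

/-- The sign encoded by a bit, with `true` for `+1`; this is the encoding of strategies. -/
def boolSign (b : Bool) : ℝ := if b then 1 else -1

theorem boolSign_eq_one_or (b : Bool) : boolSign b = 1 ∨ boolSign b = -1 := by
  cases b <;> simp [boolSign]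

theorem boolSign_not (b : Bool) : boolSign (!b) = -boolSign b := by
  cases b <;> simp [boolSign]

section Rademacher

variable {ι : Type*} [Fintype ι] [DecidableEq ι]

theorem expect_comp_sum_insert (c : ι → ℝ) {s : Finset ι} {t : ι} (ht : t ∉ s)
    (F : ℝ → ℝ) :
    𝔼 ε : ι → Bool, F (∑ i ∈ insert t s, c i * boolSign (ε i)) =
      𝔼 ε : ι → Bool, (F (∑ i ∈ s, c i * boolSign (ε i) + c t) +
        F (∑ i ∈ s, c i * boolSign (ε i) - c t)) / 2 := by
  let flip (ε : ι → Bool) : ι → Bool := Function.update ε t (!ε t)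
  have hflip : Function.Involutive flip := fun ε => by simp [flip]
  have hsum (ε : ι → Bool) :
      ∑ i ∈ s, c i * boolSign (flip ε i) = ∑ i ∈ s, c i * boolSign (ε i) :=
    sum_congr rfl fun i hi => by
      simp only [flip, Function.update_of_ne (ne_of_mem_of_not_mem hi ht)]
  have hinv : 𝔼 ε : ι → Bool, F (∑ i ∈ insert t s, c i * boolSign (ε i)) =
      𝔼 ε : ι → Bool, F (∑ i ∈ insert t s, c i * boolSign (flip ε i)) :=
    (Fintype.expect_bijective flip hflip.bijective _ _ fun _ => rfl).symm
  rw [← add_self_div_two (𝔼 ε : ι → Bool, F _)]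
  nth_rw 2 [hinv]
  rw [← expect_add_distrib, expect_div]
  refine expect_congr rfl fun ε _ => ?_
  have hflip_t : boolSign (flip ε t) = -boolSign (ε t) := by
    simp only [flip, Function.update_self, boolSign_not]
  rw [sum_insert ht, sum_insert ht, hsum, hflip_t]
  obtain h | h := boolSign_eq_one_or (ε t) <;> rw [h] <;> ring_nf

theorem expect_sum_mul_boolSign_sq (c : ι → ℝ) (s : Finset ι) :
    𝔼 ε : ι → Bool, (∑ i ∈ s, c i * boolSign (ε i)) ^ 2 = ∑ i ∈ s, c i ^ 2 := by
  induction s using Finset.induction_on with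
  | empty => simp
  | insert t s ht ih =>
    rw [expect_comp_sum_insert c ht (· ^ 2), sum_insert ht, ← ih]
    calc 𝔼 ε : ι → Bool, ((∑ i ∈ s, c i * boolSign (ε i) + c t) ^ 2 +
          (∑ i ∈ s, c i * boolSign (ε i) - c t) ^ 2) / 2
        = 𝔼 ε : ι → Bool, (c t ^ 2 + (∑ i ∈ s, c i * boolSign (ε i)) ^ 2) :=
          expect_congr rfl fun ε _ => by ring
      _ = _ := by rw [expect_add_distrib, Fintype.expect_const]

theorem expect_sum_mul_boolSign_pow_four_le (c : ι → ℝ) (s : Finset ι) :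
    𝔼 ε : ι → Bool, (∑ i ∈ s, c i * boolSign (ε i)) ^ 4 ≤ 3 * (∑ i ∈ s, c i ^ 2) ^ 2 := by
  induction s using Finset.induction_on with
  | empty => simp
  | insert t s ht ih =>
    rw [expect_comp_sum_insert c ht (· ^ 4), sum_insert ht]
    calc 𝔼 ε : ι → Bool, ((∑ i ∈ s, c i * boolSign (ε i) + c t) ^ 4 +
          (∑ i ∈ s, c i * boolSign (ε i) - c t) ^ 4) / 2
        = 𝔼 ε : ι → Bool, (c t ^ 4 + 6 * c t ^ 2 * (∑ i ∈ s, c i * boolSign (ε i)) ^ 2 +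
            (∑ i ∈ s, c i * boolSign (ε i)) ^ 4) :=
          expect_congr rfl fun ε _ => by ring
      _ = c t ^ 4 + 6 * c t ^ 2 * ∑ i ∈ s, c i ^ 2 +
            𝔼 ε : ι → Bool, (∑ i ∈ s, c i * boolSign (ε i)) ^ 4 := by
          rw [expect_add_distrib, expect_add_distrib, Fintype.expect_const, ← mul_expect,
            expect_sum_mul_boolSign_sq]
      _ ≤ c t ^ 4 + 6 * c t ^ 2 * ∑ i ∈ s, c i ^ 2 + 3 * (∑ i ∈ s, c i ^ 2) ^ 2 := by gcongr
      _ ≤ 3 * (c t ^ 2 + ∑ i ∈ s, c i ^ 2) ^ 2 := by nlinarith [sq_nonneg (c t ^ 2)]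

end Rademacher

theorem expect_sq_rpow_le {Ω : Type*} [Fintype Ω] (u : Ω → ℝ≥0) {p : ℝ} (hp : 0 < p)
    (hp2 : p < 2) :
    (𝔼 ω, u ω ^ 2) ^ ((4 - p) / 2) ≤ (𝔼 ω, u ω ^ p) * (𝔼 ω, u ω ^ 4) ^ ((2 - p) / 2) := by
  have h2p : 0 < 2 - p := by linarith
  have h4p : 0 < 4 - p := by linarith
  set q : ℝ := (4 - p) / (2 - p) with hq
  have hweight (ω) : (u ω : ℝ) ^ p * (u ω : ℝ) ^ (2 - p) = u ω ^ 2 := by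
    rw [← Real.rpow_add_of_nonneg (u ω).coe_nonneg hp.le h2p.le, add_sub_cancel, Real.rpow_two]
  have hweight_q (ω) : (u ω : ℝ) ^ p * ((u ω : ℝ) ^ (2 - p)) ^ q = u ω ^ 4 := by
    rw [← Real.rpow_mul (u ω).coe_nonneg, mul_div_cancel₀ _ h2p.ne',
      ← Real.rpow_add_of_nonneg (u ω).coe_nonneg hp.le h4p.le, add_sub_cancel]
    exact_mod_cast Real.rpow_natCast (u ω) 4
  have hq_inv : 1 - q⁻¹ = 2 / (4 - p) := by rw [hq]; field_simp; ring
  have holder : 𝔼 ω, u ω ^ 2 ≤ (𝔼 ω, u ω ^ p) ^ (2 / (4 - p)) * (𝔼 ω, u ω ^ 4) ^ q⁻¹ := by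
    have := Real.compact_inner_le_weight_mul_Lp_of_nonneg univ (p := q)
      (by rw [hq, one_le_div h2p]; linarith) (w := fun ω => (u ω : ℝ) ^ p)
      (f := fun ω => (u ω : ℝ) ^ (2 - p)) (fun _ => by positivity) (fun _ => by positivity)
    simp only [hweight, hweight_q, hq_inv] at this
    exact_mod_cast this
  calc (𝔼 ω, u ω ^ 2) ^ ((4 - p) / 2)
      ≤ ((𝔼 ω, u ω ^ p) ^ (2 / (4 - p)) * (𝔼 ω, u ω ^ 4) ^ q⁻¹) ^ ((4 - p) / 2) := by gcongr
    _ = (𝔼 ω, u ω ^ p) * (𝔼 ω, u ω ^ 4) ^ ((2 - p) / 2) := by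
      rw [NNReal.mul_rpow, ← NNReal.rpow_mul, ← NNReal.rpow_mul, hq, inv_div,
        div_mul_div_cancel₀ h4p.ne', div_self two_ne_zero, NNReal.rpow_one,
        div_mul_div_cancel₀ h4p.ne']

theorem khinchine_inequality {ι : Type*} [Fintype ι] [DecidableEq ι] (c : ι → ℝ) {p : ℝ}
    (hp : 0 < p) (hp2 : p < 2) :
    NNReal.sqrt (∑ i, ‖c i‖₊ ^ 2) ^ p ≤
      3 ^ ((2 - p) / 2) * 𝔼 ε : ι → Bool, ‖∑ i, c i * boolSign (ε i)‖₊ ^ p := by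
  set u : (ι → Bool) → ℝ≥0 := fun ε => ‖∑ i, c i * boolSign (ε i)‖₊ with hu
  set σ : ℝ≥0 := NNReal.sqrt (∑ i, ‖c i‖₊ ^ 2) with hσ
  have hσ_sq : (σ : ℝ) ^ 2 = ∑ i, c i ^ 2 := by
    rw [hσ, ← NNReal.coe_pow, NNReal.sq_sqrt]
    push_cast
    simp only [Real.norm_eq_abs, sq_abs]
  have hsecond : 𝔼 ε, u ε ^ 2 = σ ^ 2 := by
    rw [← NNReal.coe_inj]
    push_cast
    simp only [hu, coe_nnnorm, Real.norm_eq_abs, sq_abs, hσ_sq, expect_sum_mul_boolSign_sq]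
  have hfourth : 𝔼 ε, u ε ^ 4 ≤ 3 * σ ^ 4 := by
    rw [← NNReal.coe_le_coe]
    push_cast
    simp only [hu, coe_nnnorm, Real.norm_eq_abs, Even.pow_abs (n := 4) (by decide)]
    calc _ ≤ 3 * (∑ i, c i ^ 2) ^ 2 := expect_sum_mul_boolSign_pow_four_le c univ
      _ = 3 * (σ : ℝ) ^ 4 := by rw [← hσ_sq]; ring
  obtain hσ0 | hσ0 := eq_or_ne σ 0
  · rw [hσ0, NNReal.zero_rpow hp.ne']
    exact zero_le
  have hlyapunov : σ ^ (4 - p) ≤ (𝔼 ε, u ε ^ p) * (3 * σ ^ 4) ^ ((2 - p) / 2) := by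
    calc σ ^ (4 - p) = (𝔼 ε, u ε ^ 2) ^ ((4 - p) / 2) := by
          rw [hsecond, ← NNReal.rpow_two, ← NNReal.rpow_mul, mul_div_cancel₀ _ two_ne_zero]
      _ ≤ _ := (expect_sq_rpow_le u hp hp2).trans (by gcongr)
  refine le_of_mul_le_mul_right ?_ (NNReal.rpow_pos (p := 4 - 2 * p) hσ0.bot_lt)
  calc σ ^ p * σ ^ (4 - 2 * p) = σ ^ (4 - p) := by rw [← NNReal.rpow_add hσ0]; ring_nf
    _ ≤ (𝔼 ε, u ε ^ p) * (3 * σ ^ 4) ^ ((2 - p) / 2) := hlyapunov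
    _ = 3 ^ ((2 - p) / 2) * (𝔼 ε, u ε ^ p) * σ ^ (4 - 2 * p) := by
      rw [NNReal.mul_rpow, ← NNReal.rpow_natCast, ← NNReal.rpow_mul]
      push_cast
      ring_nf

section Tuples

variable {α : Type*} {k : ℕ}

theorem removeNth_succ_cons (j : Fin (k + 1)) (t : α) (y : Fin (k + 1) → α) :
    j.succ.removeNth (Fin.cons t y : Fin (k + 2) → α) = Fin.cons t (j.removeNth y) :=
  Fin.cons_comp_succ_succAbove t y j

variable [Fintype α] {M : Type*} [AddCommMonoid M]

theorem sum_eq_sum_sum_insertNth (j : Fin (k + 1)) (F : (Fin (k + 1) → α) → M) :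
    ∑ i, F i = ∑ y : Fin k → α, ∑ t, F (j.insertNth t y) := by
  rw [← (Fin.insertNthEquiv (fun _ => α) j).sum_comp, Fintype.sum_prod_type_right]
  rfl

theorem sum_eq_sum_sum_cons (F : (Fin (k + 1) → α) → M) :
    ∑ i, F i = ∑ y : Fin k → α, ∑ t, F (Fin.cons t y) := by
  simpa only [Fin.insertNth_zero'] using sum_eq_sum_sum_insertNth 0 F

end Tuples

section LoomisWhitney

variable {α : Type*} [Fintype α] {k : ℕ}

theorem loomis_whitney_two (g : Fin 2 → (Fin 1 → α) → ℝ≥0) :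
    ∑ i : Fin 2 → α, ∏ j, g j (j.removeNth i) = ∏ j, ∑ y, g j y := by
  have hline (y : Fin 1 → α) : ∑ t, g 1 (Fin.cons t (Fin.tail y)) = ∑ z, g 1 z := by
    rw [sum_eq_sum_sum_cons (g 1), Fintype.sum_unique (fun z : Fin 0 → α => _),
      Unique.default_eq (Fin.tail y)]
  have hcons (t : α) (y : Fin 1 → α) :
      (1 : Fin 2).removeNth (Fin.cons t y : Fin 2 → α) = Fin.cons t (Fin.tail y) := by
    rw [← Fin.succ_zero_eq_one, removeNth_succ_cons, Fin.removeNth_zero]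
  simp only [sum_eq_sum_sum_cons (k := 1), Fin.prod_univ_two, Fin.removeNth_zero, Fin.tail_cons,
    hcons, ← mul_sum, hline, sum_mul]

theorem loomis_whitney (g : Fin (k + 2) → (Fin (k + 1) → α) → ℝ≥0) :
    ∑ i : Fin (k + 2) → α, ∏ j, g j (j.removeNth i) ^ ((k : ℝ) + 1)⁻¹ ≤
      ∏ j, (∑ y, g j y) ^ ((k : ℝ) + 1)⁻¹ := by
  induction k with
  | zero => simpa using (loomis_whitney_two g).le
  | succ k ih =>
    push_cast
    set r : ℝ := ((k : ℝ) + 1 + 1)⁻¹ with hr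
    set G : Fin (k + 2) → (Fin (k + 1) → α) → ℝ≥0 := fun j z => ∑ t, g j.succ (Fin.cons t z)
    have hfiber (y : Fin (k + 2) → α) :
        ∑ t, ∏ j : Fin (k + 2), g j.succ (Fin.cons t (j.removeNth y)) ^ r ≤
          ∏ j, G j (j.removeNth y) ^ r := by
      have := sum_prod_rpow_inv_le fun (j : Fin (k + 2)) t => g j.succ (Fin.cons t (j.removeNth y))
      rwa [Nat.cast_succ] at this
    have hweights : r + ∑ _ : Unit, ((k : ℝ) + 1) * r = 1 := by
      rw [Fintype.sum_unique, hr]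
      field_simp
      ring
    have hsplit (x : ℝ≥0) : x ^ r = (x ^ ((k : ℝ) + 1)⁻¹) ^ (((k : ℝ) + 1) * r) := by
      rw [← NNReal.rpow_mul, inv_mul_cancel_left₀ (by positivity)]
    calc ∑ i : Fin (k + 3) → α, ∏ j, g j (j.removeNth i) ^ r
        = ∑ y : Fin (k + 2) → α, g 0 y ^ r *
            ∑ t, ∏ j : Fin (k + 2), g j.succ (Fin.cons t (j.removeNth y)) ^ r := by
          simp only [sum_eq_sum_sum_cons (k := k + 2), Fin.prod_univ_succ (n := k + 2),
            removeNth_succ_cons, Fin.removeNth_zero, Fin.tail_cons, mul_sum]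
      _ ≤ ∑ y : Fin (k + 2) → α, g 0 y ^ r *
            (∏ j, G j (j.removeNth y) ^ ((k : ℝ) + 1)⁻¹) ^ (((k : ℝ) + 1) * r) := by
          simp only [← NNReal.finsetProd_rpow, ← hsplit]
          gcongr with y
          exact hfiber y
      _ ≤ (∑ y, g 0 y) ^ r *
            (∑ y : Fin (k + 2) → α, ∏ j, G j (j.removeNth y) ^ ((k : ℝ) + 1)⁻¹) ^
              (((k : ℝ) + 1) * r) := by
          simpa using sum_rpow_mul_prod_rpow_le (g 0) (ι := Unit)
            (fun _ y => ∏ j, G j (j.removeNth y) ^ ((k : ℝ) + 1)⁻¹)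
            (q := r) (w := fun _ => ((k : ℝ) + 1) * r) (by positivity) (fun _ => by positivity)
            hweights
      _ ≤ (∑ y, g 0 y) ^ r * (∏ j, (∑ z, G j z) ^ ((k : ℝ) + 1)⁻¹) ^ (((k : ℝ) + 1) * r) := by
          gcongr
          exact ih G
      _ = ∏ j, (∑ y, g j y) ^ r := by
          simp only [← NNReal.finsetProd_rpow, ← hsplit, Fin.prod_univ_succ (n := k + 2), G,
            ← sum_eq_sum_sum_cons (k := k + 1)]

end LoomisWhitney

section Blei

variable {α : Type*} [Fintype α] {k : ℕ}

/-- The Bohnenblust–Hille exponent `2k / (k + 1)` for `k` players. -/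
def bhExponent (k : ℕ) : ℝ := 2 * k / (k + 1)

theorem bhExponent_succ_pos (k : ℕ) : 0 < bhExponent (k + 1) := by
  unfold bhExponent; positivity

theorem one_le_bhExponent_succ (k : ℕ) : 1 ≤ bhExponent (k + 1) := by
  rw [bhExponent, one_le_div (by positivity)]
  push_cast
  linarith

theorem two_sub_bhExponent (k : ℕ) : 2 - bhExponent k = 2 / (k + 1) := by
  unfold bhExponent
  field_simp
  ring

theorem bhExponent_lt_two (k : ℕ) : bhExponent k < 2 := by
  have : 0 < 2 - bhExponent k := by rw [two_sub_bhExponent]; positivity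
  linarith

/-- The `ℓ₂` norm of `f` along the line in direction `j`, the remaining coordinates being `y`. -/
def lineNorm (f : (Fin (k + 1) → α) → ℝ≥0) (j : Fin (k + 1)) (y : Fin k → α) : ℝ≥0 :=
  NNReal.sqrt (∑ t, f (j.insertNth t y) ^ 2)

theorem lineNorm_sq (f : (Fin (k + 1) → α) → ℝ≥0) (j : Fin (k + 1)) (y : Fin k → α) :
    lineNorm f j y ^ 2 = ∑ t, f (j.insertNth t y) ^ 2 :=
  NNReal.sq_sqrt _

theorem le_lineNorm (f : (Fin (k + 1) → α) → ℝ≥0) (j : Fin (k + 1)) (i : Fin (k + 1) → α) :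
    f i ≤ lineNorm f j (j.removeNth i) := by
  rw [lineNorm, NNReal.le_sqrt_iff_sq_le]
  calc f i ^ 2 = f (j.insertNth (i j) (j.removeNth i)) ^ 2 := by
        rw [Fin.insertNth_self_removeNth]
    _ ≤ ∑ t, f (j.insertNth t (j.removeNth i)) ^ 2 :=
        single_le_sum (f := fun t => f (j.insertNth t (j.removeNth i)) ^ 2)
          (fun _ _ => zero_le) (mem_univ (i j))

theorem sum_sq_mul_lineNorm_rpow (f : (Fin (k + 1) → α) → ℝ≥0) (j : Fin (k + 1)) {p : ℝ}
    (hp : p ≠ 0) :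
    ∑ i, f i ^ 2 * lineNorm f j (j.removeNth i) ^ (p - 2) = ∑ y, lineNorm f j y ^ p := by
  rw [sum_eq_sum_sum_insertNth j]
  refine sum_congr rfl fun y _ => ?_
  simp only [Fin.removeNth_insertNth]
  rw [← sum_mul, ← lineNorm_sq, ← NNReal.rpow_two, ← NNReal.rpow_add' (by simpa using hp),
    add_sub_cancel]

/- The powers of `L j` cancel. They are inserted because, for `L j = lineNorm f j (j.removeNth i)`,
Loomis–Whitney bounds the sum over `i` of the first product, and summing each factor of the second
along direction `j` gives a power of `L j` again. -/
theorem rpow_bhExponent_eq_mul_prod (x : ℝ≥0) (L : Fin (k + 2) → ℝ≥0) (hL : ∀ j, x ≤ L j) :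
    x ^ bhExponent (k + 2) =
      (∏ j, (L j ^ bhExponent (k + 1)) ^ ((k : ℝ) + 1)⁻¹) ^ ((k : ℝ) + 3)⁻¹ *
        ∏ j, (x ^ 2 * L j ^ (bhExponent (k + 1) - 2)) ^ ((k : ℝ) + 3)⁻¹ := by
  obtain rfl | hx := eq_or_ne x 0
  · have hfactor : (0 ^ 2 * L 0 ^ (bhExponent (k + 1) - 2)) ^ ((k : ℝ) + 3)⁻¹ = 0 := by
      rw [zero_pow two_ne_zero, zero_mul, NNReal.zero_rpow (by positivity)]
    have hprod : ∏ j, (0 ^ 2 * L j ^ (bhExponent (k + 1) - 2)) ^ ((k : ℝ) + 3)⁻¹ = 0 :=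
      prod_eq_zero (mem_univ 0) hfactor
    rw [NNReal.zero_rpow (bhExponent_succ_pos _).ne', hprod, mul_zero]
  have hL0 (j) : L j ≠ 0 := (hx.bot_lt.trans_le (hL j)).ne'
  have hcancel (j) : ((L j ^ bhExponent (k + 1)) ^ ((k : ℝ) + 1)⁻¹) ^ ((k : ℝ) + 3)⁻¹ *
      (L j ^ (bhExponent (k + 1) - 2)) ^ ((k : ℝ) + 3)⁻¹ = 1 := by
    rw [← NNReal.mul_rpow, ← NNReal.rpow_mul, ← NNReal.rpow_add (hL0 j)]
    have : bhExponent (k + 1) * ((k : ℝ) + 1)⁻¹ + (bhExponent (k + 1) - 2) = 0 := by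
      unfold bhExponent; push_cast; field_simp; ring
    rw [this, NNReal.rpow_zero, NNReal.one_rpow]
  calc x ^ bhExponent (k + 2) = ∏ _ : Fin (k + 2), (x ^ 2) ^ ((k : ℝ) + 3)⁻¹ := by
        rw [prod_const, card_univ, Fintype.card_fin, ← NNReal.rpow_natCast, ← NNReal.rpow_two,
          ← NNReal.rpow_mul, ← NNReal.rpow_mul, bhExponent]
        congr 1
        push_cast
        field_simp
        ring
    _ = _ := by
        rw [← NNReal.finsetProd_rpow, ← prod_mul_distrib]
        refine prod_congr rfl fun j _ => ?_
        rw [NNReal.mul_rpow, mul_left_comm, hcancel, mul_one]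

theorem blei_inequality (f : (Fin (k + 2) → α) → ℝ≥0) :
    ∑ i, f i ^ bhExponent (k + 2) ≤
      ∏ j, ((∑ y, lineNorm f j y ^ bhExponent (k + 1)) ^ (bhExponent (k + 1))⁻¹) ^
        (bhExponent (k + 2) / (k + 2)) := by
  set p := bhExponent (k + 1) with hp
  set r : ℝ := ((k : ℝ) + 3)⁻¹ with hr
  have hline (j : Fin (k + 2)) : ∑ i : Fin (k + 2) → α,
      f i ^ 2 * lineNorm f j (j.removeNth i) ^ (p - 2) = ∑ y, lineNorm f j y ^ p :=
    sum_sq_mul_lineNorm_rpow f j (bhExponent_succ_pos k).ne'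
  have hr_nonneg : 0 ≤ r := by positivity
  have hweights : r + ∑ _ : Fin (k + 2), r = 1 := by
    rw [sum_const, card_univ, Fintype.card_fin, nsmul_eq_mul, hr]
    push_cast
    field_simp
    ring
  have hexp : ((k : ℝ) + 1)⁻¹ * r + r = p⁻¹ * (bhExponent (k + 2) / (k + 2)) := by
    rw [hp, hr, bhExponent, bhExponent]
    push_cast
    field_simp
    ring
  calc ∑ i, f i ^ bhExponent (k + 2)
      = ∑ i : Fin (k + 2) → α, (∏ j, (lineNorm f j (j.removeNth i) ^ p) ^ ((k : ℝ) + 1)⁻¹) ^ r *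
          ∏ j, (f i ^ 2 * lineNorm f j (j.removeNth i) ^ (p - 2)) ^ r :=
        sum_congr rfl fun i _ => rpow_bhExponent_eq_mul_prod _ _ fun j => le_lineNorm f j i
    _ ≤ (∑ i : Fin (k + 2) → α, ∏ j, (lineNorm f j (j.removeNth i) ^ p) ^ ((k : ℝ) + 1)⁻¹) ^ r *
          ∏ j, (∑ i : Fin (k + 2) → α, f i ^ 2 * lineNorm f j (j.removeNth i) ^ (p - 2)) ^ r :=
        sum_rpow_mul_prod_rpow_le
          (fun i : Fin (k + 2) → α => ∏ j, (lineNorm f j (j.removeNth i) ^ p) ^ ((k : ℝ) + 1)⁻¹)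
          (fun j (i : Fin (k + 2) → α) => f i ^ 2 * lineNorm f j (j.removeNth i) ^ (p - 2))
          hr_nonneg (fun _ => hr_nonneg) hweights
    _ ≤ (∏ j, (∑ y, lineNorm f j y ^ p) ^ ((k : ℝ) + 1)⁻¹) ^ r *
          ∏ j, (∑ y, lineNorm f j y ^ p) ^ r := by
        simp only [hline]
        gcongr
        exact loomis_whitney fun j y => lineNorm f j y ^ p
    _ = ∏ j, ((∑ y, lineNorm f j y ^ p) ^ p⁻¹) ^ (bhExponent (k + 2) / (k + 2)) := by
        rw [← NNReal.finsetProd_rpow, ← prod_mul_distrib]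
        refine prod_congr rfl fun j _ => ?_
        rw [← NNReal.rpow_mul, ← NNReal.rpow_mul,
          ← NNReal.rpow_add_of_nonneg _ (by positivity) (by positivity), hexp]

end Blei

section SignForms

variable {α : Type*} [Fintype α] {k : ℕ}

theorem mul_boolSign_decide (r : ℝ) : r * boolSign (decide (0 ≤ r)) = |r| := by
  obtain hr | hr := le_or_gt 0 r
  · simp [boolSign, hr, abs_of_nonneg hr]
  · simp [boolSign, hr.not_ge, abs_of_neg hr]

/-- The multilinear form with coefficient tensor `a`, evaluated at deterministic strategies: the
bias (before taking absolute values) that the strategy `x` attains in the game `a = π · A`. -/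
def signForm (a : (Fin k → α) → ℝ) (x : Fin k → α → Bool) : ℝ :=
  ∑ i, a i * ∏ j, boolSign (x j (i j))

/-- The classical bias `β` of the game with payoff tensor `a = π · A`. It is defined for arbitrary
real tensors, to which the induction on the number of players leads. -/
def classicalBias (a : (Fin k → α) → ℝ) : ℝ≥0 :=
  ⨆ x, ‖signForm a x‖₊

theorem nnnorm_signForm_le_classicalBias (a : (Fin k → α) → ℝ) (x : Fin k → α → Bool) :
    ‖signForm a x‖₊ ≤ classicalBias a := by
  classical exact le_ciSup (f := fun x => ‖signForm a x‖₊) (Set.finite_range _).bddAbove x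

theorem exists_nnnorm_signForm_eq_classicalBias (a : (Fin k → α) → ℝ) :
    ∃ x, ‖signForm a x‖₊ = classicalBias a :=
  exists_eq_ciSup_of_finite

/-- The payoff tensor of the game left to the other players once player `j` commits to the strategy
`s`. -/
def fixStrategy (a : (Fin (k + 1) → α) → ℝ) (j : Fin (k + 1)) (s : α → Bool) :
    (Fin k → α) → ℝ :=
  fun y => ∑ t, a (j.insertNth t y) * boolSign (s t)

theorem signForm_fixStrategy (a : (Fin (k + 1) → α) → ℝ) (j : Fin (k + 1)) (s : α → Bool)
    (z : Fin k → α → Bool) :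
    signForm (fixStrategy a j s) z = signForm a (j.insertNth s z) := by
  simp only [signForm, fixStrategy, sum_eq_sum_sum_insertNth j, sum_mul,
    Fin.prod_univ_succAbove _ j, Fin.insertNth_apply_same, Fin.insertNth_apply_succAbove, mul_assoc]

theorem classicalBias_fixStrategy_le (a : (Fin (k + 1) → α) → ℝ) (j : Fin (k + 1))
    (s : α → Bool) : classicalBias (fixStrategy a j s) ≤ classicalBias a :=
  ciSup_le fun z => by
    rw [signForm_fixStrategy]
    exact nnnorm_signForm_le_classicalBias a _

theorem sum_lineNorm_rpow_le (a : (Fin (k + 1) → α) → ℝ) (j : Fin (k + 1)) {p : ℝ} {B : ℝ≥0}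
    (hp : 0 < p) (hp2 : p < 2) (hB : ∀ s, ∑ y, ‖fixStrategy a j s y‖₊ ^ p ≤ B) :
    ∑ y, lineNorm (fun i => ‖a i‖₊) j y ^ p ≤ 3 ^ ((2 - p) / 2) * B := by
  classical
  calc ∑ y, lineNorm (fun i => ‖a i‖₊) j y ^ p
      ≤ ∑ y, 3 ^ ((2 - p) / 2) * 𝔼 s : α → Bool, ‖fixStrategy a j s y‖₊ ^ p :=
        sum_le_sum fun y _ => khinchine_inequality (fun t => a (j.insertNth t y)) hp hp2
    _ = 3 ^ ((2 - p) / 2) * 𝔼 s : α → Bool, ∑ y, ‖fixStrategy a j s y‖₊ ^ p := by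
        rw [← mul_sum, expect_sum_comm]
    _ ≤ 3 ^ ((2 - p) / 2) * B := by
        gcongr
        exact expect_le univ_nonempty fun s _ => hB s

theorem three_mul_succ_pow_le (k : ℕ) :
    3 * ((k : ℝ≥0) + 1) ^ (2 * (k + 1)) ≤ ((k : ℝ≥0) + 2) ^ (2 * (k + 1)) := by
  have bernoulli : 2 * ((k : ℝ≥0) + 1) ^ (k + 1) ≤ ((k : ℝ≥0) + 2) ^ (k + 1) := by
    calc 2 * ((k : ℝ≥0) + 1) ^ (k + 1)
        = ((k : ℝ≥0) + 1) ^ (k + 1) + (k + 1 : ℕ) * ((k : ℝ≥0) + 1) ^ (k + 1 - 1) * 1 := by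
          rw [Nat.add_sub_cancel]
          push_cast
          ring
      _ ≤ ((k : ℝ≥0) + 1 + 1) ^ (k + 1) :=
          (Commute.one_right _).pow_add_mul_le_add_pow_of_sq_nonneg zero_le zero_le zero_le
            zero_le _
      _ = ((k : ℝ≥0) + 2) ^ (k + 1) := by rw [add_assoc, one_add_one_eq_two]
  calc 3 * ((k : ℝ≥0) + 1) ^ (2 * (k + 1)) ≤ 4 * ((k : ℝ≥0) + 1) ^ (2 * (k + 1)) := by
        gcongr
        norm_num
    _ = (2 * ((k : ℝ≥0) + 1) ^ (k + 1)) ^ 2 := by ring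
    _ ≤ (((k : ℝ≥0) + 2) ^ (k + 1)) ^ 2 := by gcongr
    _ = ((k : ℝ≥0) + 2) ^ (2 * (k + 1)) := by ring

theorem three_rpow_mul_rpow_bhExponent_le (k : ℕ) (D : ℝ≥0) :
    3 ^ ((2 - bhExponent (k + 1)) / 2) * (((k : ℝ≥0) + 1) * D) ^ bhExponent (k + 1) ≤
      (((k : ℝ≥0) + 2) * D) ^ bhExponent (k + 1) := by
  have hroot (x : ℝ≥0) : (x ^ (2 * (k + 1))) ^ ((k : ℝ) + 2)⁻¹ = x ^ bhExponent (k + 1) := by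
    rw [← NNReal.rpow_natCast, ← NNReal.rpow_mul, bhExponent]
    congr 1
    push_cast
    field_simp
    ring
  have hthree : (2 - bhExponent (k + 1)) / 2 = ((k : ℝ) + 2)⁻¹ := by
    rw [two_sub_bhExponent]
    push_cast
    field_simp
    ring
  rw [NNReal.mul_rpow, NNReal.mul_rpow, ← mul_assoc, hthree,
    ← hroot (k + 1), ← hroot (k + 2), ← NNReal.mul_rpow]
  gcongr
  exact three_mul_succ_pow_le k

theorem sum_nnnorm_le_classicalBias (a : (Fin 1 → α) → ℝ) : ∑ i, ‖a i‖₊ ≤ classicalBias a := by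
  set x : Fin 1 → α → Bool := fun _ t => decide (0 ≤ a fun _ => t)
  have hx : signForm a x = ∑ i, |a i| := by
    refine sum_congr rfl fun i _ => ?_
    have hi : x 0 (i 0) = decide (0 ≤ a i) := by
      rw [eq_const_of_unique i]
      rfl
    rw [Fin.prod_univ_one, hi, mul_boolSign_decide]
  calc ∑ i, ‖a i‖₊ = ‖signForm a x‖₊ := by
        rw [← NNReal.coe_inj, coe_nnnorm, hx, Real.norm_of_nonneg (by positivity)]
        push_cast
        rfl
    _ ≤ classicalBias a := nnnorm_signForm_le_classicalBias a x

theorem bohnenblust_hille (a : (Fin (k + 1) → α) → ℝ) :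
    ∑ i, ‖a i‖₊ ^ bhExponent (k + 1) ≤
      (((k : ℝ≥0) + 1) * classicalBias a) ^ bhExponent (k + 1) := by
  induction k with
  | zero =>
    have hexp : bhExponent (0 + 1) = 1 := by norm_num [bhExponent]
    simpa [hexp] using sum_nnnorm_le_classicalBias a
  | succ k ih =>
    set D : ℝ≥0 := ((k : ℝ≥0) + 2) * classicalBias a
    have hfix (j : Fin (k + 2)) (s : α → Bool) :
        ∑ y, ‖fixStrategy a j s y‖₊ ^ bhExponent (k + 1) ≤
          (((k : ℝ≥0) + 1) * classicalBias a) ^ bhExponent (k + 1) := by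
      refine (ih _).trans ?_
      gcongr
      · exact (bhExponent_succ_pos k).le
      · exact classicalBias_fixStrategy_le a j s
    have hline (j : Fin (k + 2)) :
        ∑ y, lineNorm (fun i => ‖a i‖₊) j y ^ bhExponent (k + 1) ≤ D ^ bhExponent (k + 1) :=
      (sum_lineNorm_rpow_le a j (bhExponent_succ_pos k) (bhExponent_lt_two _) (hfix j)).trans
        (three_rpow_mul_rpow_bhExponent_le k _)
    have hp := bhExponent_succ_pos k
    have hq := bhExponent_succ_pos (k + 1)
    calc ∑ i, ‖a i‖₊ ^ bhExponent (k + 2)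
        ≤ ∏ j, ((∑ y, lineNorm (fun i => ‖a i‖₊) j y ^ bhExponent (k + 1)) ^
            (bhExponent (k + 1))⁻¹) ^ (bhExponent (k + 2) / (k + 2)) := blei_inequality _
      _ ≤ ∏ _ : Fin (k + 2), ((D ^ bhExponent (k + 1)) ^
            (bhExponent (k + 1))⁻¹) ^ (bhExponent (k + 2) / (k + 2)) := by
          gcongr with j
          exact hline j
      _ = D ^ bhExponent (k + 2) := by
          rw [NNReal.rpow_rpow_inv hp.ne', prod_const, card_univ, Fintype.card_fin,
            ← NNReal.rpow_mul_natCast]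
          push_cast
          rw [div_mul_cancel₀ _ (by positivity)]
      _ = (((k + 1 : ℕ) + 1) * classicalBias a) ^ bhExponent (k + 2) := by
          push_cast
          rw [add_assoc, one_add_one_eq_two]

theorem sum_nnnorm_le_mul_classicalBias (a : (Fin (k + 1) → α) → ℝ) :
    ∑ i, ‖a i‖₊ ≤
      ((k : ℝ≥0) + 1) * (Fintype.card α : ℝ≥0) ^ ((k : ℝ) / 2) * classicalBias a := by
  set q := bhExponent (k + 1) with hq
  have hq_pos : 0 < q := bhExponent_succ_pos k
  have hcard : (∑ _ : Fin (k + 1) → α, (1 : ℝ≥0)) ^ (1 - q⁻¹) =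
      (Fintype.card α : ℝ≥0) ^ ((k : ℝ) / 2) := by
    rw [sum_const, card_univ, Fintype.card_pi_const, nsmul_one, Nat.cast_pow,
      ← NNReal.rpow_natCast_mul, hq, bhExponent]
    congr 1
    push_cast
    field_simp
    ring
  calc ∑ i, ‖a i‖₊ = ∑ i, 1 * ‖a i‖₊ := by simp only [one_mul]
    _ ≤ (∑ _ : Fin (k + 1) → α, (1 : ℝ≥0)) ^ (1 - q⁻¹) * (∑ i, 1 * ‖a i‖₊ ^ q) ^ q⁻¹ :=
        NNReal.inner_le_weight_mul_Lp univ (one_le_bhExponent_succ k) 1 fun i => ‖a i‖₊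
    _ ≤ (Fintype.card α : ℝ≥0) ^ ((k : ℝ) / 2) *
          ((((k : ℝ≥0) + 1) * classicalBias a) ^ q) ^ q⁻¹ := by
        simp only [hcard, one_mul]
        gcongr
        exact bohnenblust_hille a
    _ = ((k : ℝ≥0) + 1) * (Fintype.card α : ℝ≥0) ^ ((k : ℝ) / 2) * classicalBias a := by
        rw [NNReal.rpow_rpow_inv hq_pos.ne']
        ring

theorem sum_abs_mul_sign {ι : Type*} [Fintype ι] {w A : ι → ℝ} (hw : ∀ i, 0 ≤ w i)
    (hA : ∀ i, A i = 1 ∨ A i = -1) : ∑ i, |w i * A i| = ∑ i, w i :=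
  sum_congr rfl fun i _ => by
    rw [abs_mul, (abs_eq zero_le_one).2 (hA i), mul_one, abs_of_nonneg (hw i)]

theorem rpow_neg_three_halves_le_inv {r : ℝ} (hr : 1 ≤ r) : r ^ (-(3 : ℝ) / 2) ≤ r⁻¹ := by
  rw [← Real.rpow_neg_one]
  exact Real.rpow_le_rpow_of_exponent_le hr (by norm_num)

theorem xor_game_bias_lower_bound_general (hk : 1 ≤ k) (a : (Fin k → α) → ℝ) :
    ∃ x : Fin k → α → Bool,
      (k : ℝ)⁻¹ * (Fintype.card α : ℝ) ^ (-((k : ℝ) - 1) / 2) * ∑ i, |a i| ≤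
        |∑ i, a i * ∏ j, (if x j (i j) then (1 : ℝ) else -1)| := by
  obtain ⟨k, rfl⟩ := Nat.exists_eq_add_of_le' hk
  obtain ⟨x, hx⟩ := exists_nnnorm_signForm_eq_classicalBias a
  have hmass : ∑ i, |a i| ≤
      ((k + 1 : ℕ) * (Fintype.card α : ℝ) ^ ((k : ℝ) / 2)) * |signForm a x| := by
    have := sum_nnnorm_le_mul_classicalBias a
    rw [← hx, ← NNReal.coe_le_coe] at this
    push_cast at this ⊢
    simpa only [Real.norm_eq_abs] using this
  refine ⟨x, ?_⟩
  have hneg : -(((k + 1 : ℕ) : ℝ) - 1) / 2 = -((k : ℝ) / 2) := by push_cast; ring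
  rw [hneg, Real.rpow_neg (by positivity), ← mul_inv]
  exact inv_mul_le_of_le_mul₀ (by positivity) (abs_nonneg _) hmass

end SignForms

/-- General lower bound on the classical bias of multiplayer XOR games: there is a
universal constant `c > 0` such that every `k`-player XOR game `G = (π, A)` with `n`
possible inputs per player (given by a probability distribution `π` on `{1,…,n}^k` and
a `±1`-valued tensor `A`) admits a deterministic strategy, i.e. signs
`x¹,…,xᵏ ∈ {±1}ⁿ`, achieving bias at least `c k^{-3/2} n^{-(k-1)/2}`; hence
`β(G) ≥ c k^{-3/2} n^{-(k-1)/2}`. -/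
theorem xor_game_bias_lower_bound :
    ∃ c : ℝ, 0 < c ∧ ∀ k n : ℕ, 1 ≤ k → 1 ≤ n →
      ∀ dist A : (Fin k → Fin n) → ℝ,
      (∀ i, 0 ≤ dist i) → (∑ i : Fin k → Fin n, dist i) = 1 →
      (∀ i, A i = 1 ∨ A i = -1) →
      ∃ x : Fin k → Fin n → Bool,
        c * (k : ℝ) ^ (-(3 : ℝ) / 2) * (n : ℝ) ^ (-((k : ℝ) - 1) / 2) ≤
          |∑ i : Fin k → Fin n, dist i * A i * ∏ j, (if x j (i j) then (1 : ℝ) else -1)| := by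
  refine ⟨1, one_pos, fun k n hk _ dist A hdist hsum hA => ?_⟩
  obtain ⟨x, hx⟩ := xor_game_bias_lower_bound_general hk fun i => dist i * A i
  refine ⟨x, le_trans ?_ hx⟩
  rw [sum_abs_mul_sign hdist hA, hsum, one_mul, mul_one, Fintype.card_fin]
  gcongr
  exact rpow_neg_three_halves_le_inv (Nat.one_le_cast.2 hk)
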